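/- Let F be an algebraically closed field of characteristic zero and let L : Ten_{n,d}(F) → Mat_m(F) be a linear map on the space of d-dimensional tensors of side n such that rank(L(u_1 ⊗ ··· ⊗ u_d)) ≤ r for all vectors u_1,...,u_d ∈ F^n. Then for every tensor T ∈ Ten_{n,d}(F), rank(L(T)) ≤ r · 2^d · n^{⌊d/2⌋}. -/

import Mathlib

open Finset in
theorem tb_rank_add {F : Type*} [Field F] {m : ℕ} (A B : Matrix (Fin m) (Fin m) F) :
    (A + B).rank ≤ A.rank + B.rank := by
  unfold Matrix.rank
  rw [Matrix.mulVecLin_add]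
  refine le_trans (Submodule.finrank_mono (LinearMap.range_add_le _ _)) ?_
  exact Submodule.finrank_add_le_finrank_add_finrank _ _

theorem tb_rank_sum {F : Type*} [Field F] {m : ℕ} {ι : Type*} (s : Finset ι)
    (A : ι → Matrix (Fin m) (Fin m) F) (c : ℕ) (h : ∀ i ∈ s, (A i).rank ≤ c) :
    (∑ i ∈ s, A i).rank ≤ s.card * c := by
  classical
  induction s using Finset.induction_on with
  | empty => simp
  | insert a s ha ih =>
    rw [Finset.sum_insert ha, Finset.card_insert_of_notMem ha]
    have h1 := tb_rank_add (A a) (∑ i ∈ s, A i)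
    have h2 := ih (fun i hi => h i (Finset.mem_insert_of_mem hi))
    have h3 := h a (Finset.mem_insert_self _ _)
    linarith

theorem tb_fiber {F : Type*} [Field F] {m r : ℕ} {I J : Type*} [Fintype I] [Fintype J]
    (φ : J → I) (A : I → Matrix (Fin m) (Fin r) F) (B : J → Matrix (Fin r) (Fin m) F) :
    (∑ j, A (φ j) * B j).rank ≤ Fintype.card I * r := by
  classical
  rw [← Finset.sum_fiberwise Finset.univ φ]
  refine tb_rank_sum _ _ r (fun i _ => ?_)
  have : ∑ j ∈ Finset.univ with φ j = i, A (φ j) * B j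
      = A i * ∑ j ∈ Finset.univ with φ j = i, B j := by
    rw [Matrix.mul_sum]
    refine Finset.sum_congr rfl (fun j hj => ?_)
    rw [(Finset.mem_filter.1 hj).2]
  rw [this]
  exact (Matrix.rank_mul_le_left _ _).trans (Matrix.rank_le_width _)

theorem tb_fiber' {F : Type*} [Field F] {m r : ℕ} {I J : Type*} [Fintype I] [Fintype J]
    (φ : J → I) (A : J → Matrix (Fin m) (Fin r) F) (B : I → Matrix (Fin r) (Fin m) F) :
    (∑ j, A j * B (φ j)).rank ≤ Fintype.card I * r := by
  rw [← Matrix.rank_transpose, Matrix.transpose_sum]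
  simp_rw [Matrix.transpose_mul]
  exact tb_fiber φ (fun i => (B i).transpose) (fun j => (A j).transpose)

/-- The squarefree exponent picking `(k, j k)` for `k ∈ S`. -/
noncomputable def tbE {d n : ℕ} (S : Finset (Fin d)) (j : Fin d → Fin n) : Fin d × Fin n →₀ ℕ :=
  ∑ k ∈ S, Finsupp.single (k, j k) 1

theorem tbE_apply {d n : ℕ} (S : Finset (Fin d)) (j : Fin d → Fin n) (k : Fin d) (i : Fin n) :
    tbE S j (k, i) = if k ∈ S ∧ j k = i then 1 else 0 := by
  classical
  unfold tbE
  rw [Finsupp.finsetSum_apply]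
  simp only [Finsupp.single_apply, Prod.mk.injEq]
  by_cases h : k ∈ S ∧ j k = i
  · rw [if_pos h, Finset.sum_eq_single k]
    · simp [h.2]
    · intro b _ hb; simp [hb]
    · intro h'; exact absurd h.1 h'
  · rw [if_neg h]
    refine Finset.sum_eq_zero (fun b hb => ?_)
    rw [if_neg]
    rintro ⟨rfl, h2⟩
    exact h ⟨hb, h2⟩

theorem tbE_eq_univ {d n : ℕ} (S : Finset (Fin d)) (j j' : Fin d → Fin n) :
    tbE S j' = tbE Finset.univ j ↔ S = Finset.univ ∧ j' = j := by
  constructor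
  · intro h
    have key : ∀ k, k ∈ S ∧ j' k = j k := by
      intro k
      have := DFunLike.congr_fun h (k, j k)
      rw [tbE_apply, tbE_apply] at this
      by_contra hc
      simp [hc] at this
    exact ⟨Finset.eq_univ_of_forall (fun k => (key k).1), funext fun k => (key k).2⟩
  · rintro ⟨rfl, rfl⟩; rfl

theorem tbE_congr {d n : ℕ} (S : Finset (Fin d)) (j j' : Fin d → Fin n)
    (h : ∀ k ∈ S, j k = j' k) : tbE S j = tbE S j' :=
  Finset.sum_congr rfl (fun k hk => by rw [h k hk])

theorem tbE_anti {d n : ℕ} {M : Type*} [AddCommMonoid M] (j : Fin d → Fin n)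
    (f : (Fin d × Fin n →₀ ℕ) × (Fin d × Fin n →₀ ℕ) → M) :
    ∑ p ∈ Finset.HasAntidiagonal.antidiagonal (tbE Finset.univ j), f p
      = ∑ S : Finset (Fin d), f (tbE S j, tbE Sᶜ j) := by
  classical
  symm
  refine Finset.sum_bij (fun S _ => (tbE S j, tbE Sᶜ j)) ?_ ?_ ?_ ?_
  · intro S _
    rw [Finset.HasAntidiagonal.mem_antidiagonal]
    exact Finset.sum_add_sum_compl S _
  · intro S _ S' _ h
    ext k
    have := DFunLike.congr_fun (Prod.mk.inj h).1 (k, j k)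
    rw [tbE_apply, tbE_apply] at this
    by_cases h1 : k ∈ S <;> by_cases h2 : k ∈ S' <;> simp_all
  · rintro ⟨a, b⟩ hab
    rw [Finset.HasAntidiagonal.mem_antidiagonal] at hab
    have hv : ∀ k i, a (k, i) + b (k, i) = if j k = i then 1 else 0 := by
      intro k i
      have := DFunLike.congr_fun hab (k, i)
      rw [tbE_apply] at this
      simpa using this
    refine ⟨Finset.univ.filter (fun k => a (k, j k) = 1), Finset.mem_univ _, ?_⟩
    refine Prod.ext ?_ ?_
    · ext ⟨k, i⟩
      have := hv k i
      simp only [tbE_apply, Finset.mem_filter, Finset.mem_univ, true_and]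
      by_cases hi : j k = i
      · subst hi
        simp at this ⊢
        split_ifs <;> omega
      · simp [hi] at this ⊢
        omega
    · ext ⟨k, i⟩
      have := hv k i
      simp only [tbE_apply, Finset.mem_compl, Finset.mem_filter, Finset.mem_univ, true_and]
      by_cases hi : j k = i
      · subst hi
        simp at this ⊢
        split_ifs <;> omega
      · simp [hi] at this ⊢
        omega
  · intro S _; rfl

/-- Combining a factorization over power series. -/
theorem tb_combine {F : Type*} [Field F] {n m d r : ℕ} (hn : 0 < n)
    (T : (Fin d → Fin n) → F)
    (N : (Fin d → Fin n) → Matrix (Fin m) (Fin m) F)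
    (A : (Fin d × Fin n →₀ ℕ) → Matrix (Fin m) (Fin r) F)
    (B : (Fin d × Fin n →₀ ℕ) → Matrix (Fin r) (Fin m) F)
    (h : ∀ j, N j = ∑ S : Finset (Fin d), A (tbE S j) * B (tbE Sᶜ j)) :
    (∑ j, T j • N j).rank ≤ r * 2 ^ d * n ^ (d / 2) := by
  classical
  have e : ∑ j, T j • N j
      = ∑ S : Finset (Fin d), ∑ j, T j • (A (tbE S j) * B (tbE Sᶜ j)) := by
    rw [Finset.sum_comm]
    refine Finset.sum_congr rfl (fun j _ => ?_)
    rw [h, Finset.smul_sum]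
  rw [e]
  refine (tb_rank_sum _ _ (n ^ (d / 2) * r) ?_).trans ?_
  · intro S _
    let ext' (S : Finset (Fin d)) (i : S → Fin n) : Fin d → Fin n :=
      fun k => if hk : k ∈ S then i ⟨k, hk⟩ else ⟨0, hn⟩
    have hext : ∀ (S : Finset (Fin d)) (j : Fin d → Fin n),
        tbE S j = tbE S (ext' S (fun k => j k)) := by
      intro S j
      apply tbE_congr
      intro k hk
      simp [ext', hk]
    have hc : S.card + Sᶜ.card = d := by
      rw [Finset.card_add_card_compl, Fintype.card_fin]
    rcases le_total S.card Sᶜ.card with hle | hle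
    · have := tb_fiber (fun (j : Fin d → Fin n) (k : S) => j k)
        (fun i => A (tbE S (ext' S i))) (fun j => T j • B (tbE Sᶜ j))
      simp only [← hext, Matrix.mul_smul] at this
      refine this.trans ?_
      gcongr
      rw [Fintype.card_fun, Fintype.card_fin, Fintype.card_coe]
      exact Nat.pow_le_pow_right hn (by omega)
    · have := tb_fiber' (fun (j : Fin d → Fin n) (k : (Sᶜ : Finset (Fin d))) => j k)
        (fun j => T j • A (tbE S j)) (fun i => B (tbE Sᶜ (ext' Sᶜ i)))
      simp only [← hext, Matrix.smul_mul] at this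
      refine this.trans ?_
      gcongr
      rw [Fintype.card_fun, Fintype.card_fin, Fintype.card_coe]
      exact Nat.pow_le_pow_right hn (by omega)
  · rw [Finset.card_univ, Fintype.card_finset, Fintype.card_fin]
    apply le_of_eq; ring

open MvPolynomial in
/-- The matrix of polynomials `L ((u_1 + x_1) ⊗ ... ⊗ (u_d + x_d))`. -/
noncomputable def tbP {F : Type*} [Field F] {n m d : ℕ}
    (N : (Fin d → Fin n) → Matrix (Fin m) (Fin m) F) (u : Fin d → Fin n → F) :
    Matrix (Fin m) (Fin m) (MvPolynomial (Fin d × Fin n) F) :=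
  fun a b => ∑ j : Fin d → Fin n, C (N j a b) * ∏ k, (X (k, j k) + C (u k (j k)))

open MvPolynomial in
theorem tbP_eval {F : Type*} [Field F] {n m d : ℕ}
    (N : (Fin d → Fin n) → Matrix (Fin m) (Fin m) F) (u : Fin d → Fin n → F)
    (x : Fin d × Fin n → F) :
    (eval x).mapMatrix (tbP N u) = ∑ j : Fin d → Fin n, (∏ k, (x (k, j k) + u k (j k))) • N j := by
  ext a b
  simp [tbP, Matrix.sum_apply, mul_comm]

open MvPolynomial in
theorem tbP_coeff {F : Type*} [Field F] {n m d : ℕ}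
    (N : (Fin d → Fin n) → Matrix (Fin m) (Fin m) F) (u : Fin d → Fin n → F)
    (j : Fin d → Fin n) (a b : Fin m) :
    coeff (tbE Finset.univ j) (tbP N u a b) = N j a b := by
  classical
  have key : ∀ j' : Fin d → Fin n, coeff (tbE Finset.univ j)
      (∏ k, (X (k, j' k) + C (u k (j' k)) : MvPolynomial (Fin d × Fin n) F))
        = if j' = j then 1 else 0 := by
    intro j'
    rw [Finset.prod_add, coeff_sum]
    have : ∀ S : Finset (Fin d), coeff (tbE Finset.univ j)
        ((∏ k ∈ S, X (k, j' k)) * ∏ k ∈ Finset.univ \ S, C (u k (j' k)) :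
          MvPolynomial (Fin d × Fin n) F)
        = if S = Finset.univ ∧ j' = j then ∏ k ∈ Finset.univ \ S, u k (j' k) else 0 := by
      intro S
      have h1 : (∏ k ∈ S, X (k, j' k) : MvPolynomial (Fin d × Fin n) F)
          = monomial (tbE S j') 1 := by
        rw [tbE, monomial_sum_one]
        rfl
      rw [h1, ← map_prod, mul_comm, coeff_C_mul, coeff_monomial]
      simp only [tbE_eq_univ, mul_ite, mul_one, mul_zero]
    simp only [this]
    rw [Finset.sum_eq_single Finset.univ]
    · simp
    · intro S _ hS; simp [hS]
    · simp
  simp only [tbP, coeff_sum, coeff_C_mul, key]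
  simp

/-- Schur complement factorization. -/
theorem tb_schur {R : Type*} [CommRing R] {m s : ℕ} (M : Matrix (Fin m) (Fin m) R)
    (p q : Fin s → Fin m) (hu : IsUnit (M.submatrix p q).det)
    (hz : ∀ p' q' : Fin (s + 1) → Fin m, (M.submatrix p' q').det = 0) :
    ∃ (A : Matrix (Fin m) (Fin s) R) (B : Matrix (Fin s) (Fin m) R), M = A * B := by
  classical
  have hU := (Matrix.isUnit_iff_isUnit_det _).2 hu
  let _ : Invertible (M.submatrix p q) := hU.invertible
  refine ⟨M.submatrix id q * ⅟(M.submatrix p q), M.submatrix p id, ?_⟩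
  ext a b
  have h := Matrix.det_fromBlocks₁₁ (M.submatrix p q) (M.submatrix p (fun _ : Fin 1 => b))
    (M.submatrix (fun _ : Fin 1 => a) q) (M.submatrix (fun _ : Fin 1 => a) (fun _ : Fin 1 => b))
  have h0 : (Matrix.fromBlocks (M.submatrix p q) (M.submatrix p (fun _ : Fin 1 => b))
    (M.submatrix (fun _ : Fin 1 => a) q)
    (M.submatrix (fun _ : Fin 1 => a) (fun _ : Fin 1 => b))).det = 0 := by
    have := hz (Sum.elim p (fun _ : Fin 1 => a) ∘ finSumFinEquiv.symm)
      (Sum.elim q (fun _ : Fin 1 => b) ∘ finSumFinEquiv.symm)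
    rw [← Matrix.submatrix_submatrix, Matrix.det_submatrix_equiv_self] at this
    rw [← this]
    congr 1
    ext (i | i) (k | k) <;> rfl
  rw [h0] at h
  have h2 := (hu.mul_right_eq_zero).1 h.symm
  rw [Matrix.det_fin_one, Matrix.sub_apply, sub_eq_zero] at h2
  exact h2

theorem stmt14 (F : Type*) [Field F] [IsAlgClosed F] [CharZero F] (n m d r : ℕ)
    (L : ((Fin d → Fin n) → F) →ₗ[F] Matrix (Fin m) (Fin m) F)
    (hL : ∀ u : Fin d → Fin n → F,
      (L (fun j => ∏ k, u k (j k))).rank ≤ r) :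
    ∀ T : (Fin d → Fin n) → F, (L T).rank ≤ r * 2 ^ d * n ^ (d / 2) := by
  classical
  intro T
  rcases Nat.eq_zero_or_pos n with hn | hn
  · subst hn
    rcases Nat.eq_zero_or_pos d with hd | hd
    · subst hd
      have hT : T = T (fun k => k.elim0) • (fun j : Fin 0 → Fin 0 => ∏ k, (fun k _ => (1 : F)) k (j k)) := by
        ext j
        simp [Subsingleton.elim j (fun k => k.elim0)]
      rw [hT, map_smul, ← one_mul (L _), ← Matrix.smul_mul]
      refine (Matrix.rank_mul_le_right _ _).trans ?_
      simpa using hL (fun k _ => (1 : F))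
    · have : T = 0 := by
        ext j
        exact (j ⟨0, hd⟩).elim0
      rw [this, map_zero, Matrix.rank_zero]
      exact Nat.zero_le _
  let N : (Fin d → Fin n) → Matrix (Fin m) (Fin m) F := fun j => L (Pi.single j 1)
  have hN : ∀ T : (Fin d → Fin n) → F, L T = ∑ j, T j • N j := by
    intro T
    conv_lhs => rw [pi_eq_sum_univ' T]
    simp [N]
  let Q : ℕ → Prop := fun s => ∃ (u : Fin d → Fin n → F) (p q : Fin s → Fin m),
    ((L (fun j => ∏ k, u k (j k))).submatrix p q).det ≠ 0
  have hQr : ∀ s, Q s → s ≤ r := by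
    rintro s ⟨u, p, q, h⟩
    have h1 := Matrix.rank_of_det_ne_zero h
    have h2 := Matrix.rank_submatrix_le (L (fun j => ∏ k, u k (j k))) p q
    rw [Fintype.card_fin] at h1
    exact h1 ▸ h2.trans (hL u)
  have hQ0 : Q 0 := ⟨0, Fin.elim0, Fin.elim0, by simp⟩
  obtain ⟨s, hs, hs1⟩ : ∃ s, Q s ∧ ¬ Q (s + 1) := by
    by_contra hc
    push Not at hc
    have : ∀ s, Q s := fun s => Nat.rec hQ0 hc s
    have := hQr _ (this (r + 1))
    omega
  have hsr := hQr s hs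
  obtain ⟨u, p, q, hd⟩ := hs
  let ι := MvPolynomial.coeToMvPowerSeries.ringHom (σ := Fin d × Fin n) (R := F)
  let P := tbP N u
  have hev : ∀ x : Fin d × Fin n → F, (MvPolynomial.eval x).mapMatrix P
      = L (fun j => ∏ k, (fun k i => x (k, i) + u k i) k (j k)) := by
    intro x
    rw [hN]
    exact tbP_eval N u x
  have hz : ∀ p' q' : Fin (s + 1) → Fin m, ((ι.mapMatrix P).submatrix p' q').det = 0 := by
    intro p' q'
    have h0 : (P.submatrix p' q').det = 0 := by
      apply MvPolynomial.funext
      intro x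
      rw [RingHom.map_det, map_zero]
      by_contra hc
      refine hs1 ⟨fun k i => x (k, i) + u k i, p', q', ?_⟩
      rw [← hev]
      exact hc
    have := congrArg ι h0
    rw [RingHom.map_det, map_zero] at this
    exact this
  have hu : IsUnit ((ι.mapMatrix P).submatrix p q).det := by
    rw [MvPowerSeries.isUnit_iff_constantCoeff, isUnit_iff_ne_zero, RingHom.map_det]
    have e : (MvPowerSeries.constantCoeff (σ := Fin d × Fin n) (R := F)).mapMatrix
        ((ι.mapMatrix P).submatrix p q)
        = (L (fun j => ∏ k, u k (j k))).submatrix p q := by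
      have h1 := hev 0
      simp only [Pi.zero_apply, zero_add] at h1
      rw [← h1]
      ext a b
      change MvPowerSeries.constantCoeff ((P (p a) (q b)) : MvPowerSeries (Fin d × Fin n) F)
        = MvPolynomial.eval 0 (P (p a) (q b))
      rw [← MvPowerSeries.coeff_zero_eq_constantCoeff_apply, MvPolynomial.coeff_coe,
        MvPolynomial.eval_zero, MvPolynomial.constantCoeff_eq]
    rw [e]
    exact hd
  obtain ⟨A, B, hAB⟩ := tb_schur _ p q hu hz
  have := tb_combine hn T N (fun e => A.map (MvPowerSeries.coeff e))
    (fun e => B.map (MvPowerSeries.coeff e)) (by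
      intro j
      ext a b
      have h1 := congrFun (congrFun hAB a) b
      have h2 := tbP_coeff N u j a b
      rw [← MvPolynomial.coeff_coe] at h2
      rw [← h2]
      change MvPowerSeries.coeff _ ((ι.mapMatrix P) a b) = _
      rw [h1, Matrix.mul_apply, map_sum]
      simp only [MvPowerSeries.coeff_mul]
      rw [Finset.sum_comm, Matrix.sum_apply, tbE_anti j]
      rfl)
  rw [hN]
  refine this.trans ?_
  gcongr
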